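/- Let dB ≤ dC be positive integers, N a positive integer, ε ∈ [0,1) a real number, Δ : Fin N → ℝ with Δ i ≥ 0 for all i, and γ > 1/(1−ε)² a real number. Suppose v_1, …, v_N : (Fin dB) × (Fin dC) → ℂ are unit vectors with E(v_i) ≥ logb 2 dB − Δ i for every i, and M_1, …, M_N are matrices on (Fin dB) × (Fin dC) such that each M_i is positive semidefinite, each M_i^Γ is positive semidefinite, 1 − ∑ i, M_i is positive semidefinite, and Re (Matrix.trace (φ_{v_i} * M_i)) ≥ 1 − ε for every i. Then (N : ℝ) ≤ (1 − ε − √(1/γ))⁻¹ · ((1/N) · ∑ i, 2^{−γ(Δ i + 1)})⁻¹ · dC, and consequently (N : ℝ) ≤ (1 − ε − √(1/γ))⁻¹ · 2^{γ · (∑ i, (Δ i + 1))/N} · dC. -/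

import Mathlib

/-!
The theorem follows from a lower bound on the trace of a single effect `M` that detects a unit
vector `v` of entanglement at least `log dB - Δ` with probability `1 - ε`, namely
`Tr M ≥ (1 - ε - √(1/γ)) * dB * 2 ^ (-γ (Δ + 1))`. Since `∑ M i ≤ 1`, these traces add up to at
most `dB * dC`, which is the first inequality; the second one is Jensen's inequality for `exp`.

For the lower bound, replace `v` by a unit vector `w` close to it whose reduced state is at most
`t = 2 ^ (γ (Δ + 1)) / dB`.

* If `ρ_B(w) ≤ t`, the partial transpose of `|w⟩⟨w|` is at most `t` as an operator, so the PPT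
  condition gives `⟨w, M w⟩ = Tr (|w⟩⟨w|^Γ M^Γ) ≤ t Tr M` (`ppt_trace_le`).
* For `0 ≤ M ≤ 1`, passing from `v` to `w` changes the detection probability by at most
  `√(1 - |⟨v, w⟩|²)` (`effect_le_add_sqrt`).
* A suitable `w` with `|⟨v, w⟩|² ≥ 1 - 1/γ` exists (`exists_capped_vector`). It is `(K ⊗ 1) v`,
  with `K` a function of the reduced state of `v`, chosen so that the eigenvalues `p i` become
  `min (r * p i) t / Z`, where `r = γ / (γ - 1)` and `Z` is the normalization. Both requirements
  hold as soon as `Z ≥ 1`.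
* `Z ≥ 1` is a statement about the spectrum only (`one_le_sum_min`). Let `A` be the set of
  eigenvalues capped at `t` and `a` their total weight. If `a ≤ 1/γ`, the uncapped part alone
  contributes `r (1 - a) ≥ 1`. Otherwise the entropy hypothesis and concavity of the entropy force
  `|A| ≥ a / t`, so the capped part contributes at least `a` and the rest at least `1 - a`.
-/

open scoped BigOperators Classical ComplexOrder Matrix

noncomputable section

/-- von Neumann entropy in bits of a (Hermitian) matrix, via its eigenvalues. -/
def vnEntropy {n : Type*} [Fintype n] [DecidableEq n] (ρ : Matrix n n ℂ) : ℝ :=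
  if h : ρ.IsHermitian then -∑ i, h.eigenvalues i * Real.logb 2 (h.eigenvalues i) else 0

/-- A density matrix: positive semidefinite with unit trace. -/
def IsDensityMatrix {n : Type*} [Fintype n] [DecidableEq n] (ρ : Matrix n n ℂ) : Prop :=
  ρ.PosSemidef ∧ ρ.trace = 1

/-- Partial trace over the second (C) factor. -/
def ptraceC {dB dC : ℕ} (M : Matrix (Fin dB × Fin dC) (Fin dB × Fin dC) ℂ) :
    Matrix (Fin dB) (Fin dB) ℂ := fun i k => ∑ j, M (i, j) (k, j)

/-- Partial trace over the first (B) factor. -/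
def ptraceB {dB dC : ℕ} (M : Matrix (Fin dB × Fin dC) (Fin dB × Fin dC) ℂ) :
    Matrix (Fin dC) (Fin dC) ℂ := fun j l => ∑ i, M (i, j) (i, l)

/-- Partial transpose (on the second factor). -/
def ptranspose {dB dC : ℕ} (M : Matrix (Fin dB × Fin dC) (Fin dB × Fin dC) ℂ) :
    Matrix (Fin dB × Fin dC) (Fin dB × Fin dC) ℂ := fun p q => M (p.1, q.2) (q.1, p.2)

/-- The pure state (rank-one projector) associated to a vector. -/
def pureState {ι : Type*} (v : ι → ℂ) : Matrix ι ι ℂ := Matrix.vecMulVec v (star v)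

/-- A unit vector. -/
def IsUnitVec {ι : Type*} [Fintype ι] (v : ι → ℂ) : Prop := ∑ x, Complex.normSq (v x) = 1

/-- Entanglement entropy of a bipartite pure state. -/
def entg {dB dC : ℕ} (v : Fin dB × Fin dC → ℂ) : ℝ := vnEntropy (ptraceC (pureState v))

/-- The n-fold tensor power of an isometry `U : A → B ⊗ C`. -/
def tensorPow {dA dB dC : ℕ} (U : Matrix (Fin dB × Fin dC) (Fin dA) ℂ) (n : ℕ) :
    Matrix (Fin n → Fin dB × Fin dC) (Fin n → Fin dA) ℂ :=
  fun f g => ∏ k, U (f k) (g k)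

/-- n-fold partial trace over the C factors. -/
def ptraceCn {dB dC n : ℕ}
    (M : Matrix (Fin n → Fin dB × Fin dC) (Fin n → Fin dB × Fin dC) ℂ) :
    Matrix (Fin n → Fin dB) (Fin n → Fin dB) ℂ :=
  fun fB gB => ∑ fC : Fin n → Fin dC, M (fun k => (fB k, fC k)) (fun k => (gB k, fC k))

/-- n-fold partial transpose over the C factors. -/
def ptransposeN {dB dC n : ℕ}
    (M : Matrix (Fin n → Fin dB × Fin dC) (Fin n → Fin dB × Fin dC) ℂ) :
    Matrix (Fin n → Fin dB × Fin dC) (Fin n → Fin dB × Fin dC) ℂ :=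
  fun f g => M (fun k => ((f k).1, (g k).2)) (fun k => ((g k).1, (f k).2))

/-- A POVM on the n-fold space implemented by one-way LOCC from C to B:
Charlie measures `(M x)` on `C^n`, sends `x`, and Bob measures `(B x i)` on `B^n`. -/
def IsOneWayLOCC {dB dC n N : ℕ}
    (Np : Fin N → Matrix (Fin n → Fin dB × Fin dC) (Fin n → Fin dB × Fin dC) ℂ) : Prop :=
  ∃ (m : ℕ) (M : Fin m → Matrix (Fin n → Fin dC) (Fin n → Fin dC) ℂ)
    (B : Fin m → Fin N → Matrix (Fin n → Fin dB) (Fin n → Fin dB) ℂ),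
    (∀ x, (M x).PosSemidef) ∧ (∑ x, M x) = 1 ∧
    (∀ x i, (B x i).PosSemidef) ∧ (∀ x, (∑ i, B x i) = 1) ∧
    (∀ i f g, Np i f g =
      ∑ x, B x i (fun k => (f k).1) (fun k => (g k).1) * M x (fun k => (f k).2) (fun k => (g k).2))

/-- The rate R is achievable with one-way LOCC (C→B) decoding for the isometry U. -/
def AchievableOneWayCB {dA dB dC : ℕ} (U : Matrix (Fin dB × Fin dC) (Fin dA) ℂ) (R : ℝ) : Prop :=
  ∀ ε : ℝ, 0 < ε → ∃ n₀ : ℕ, ∀ n : ℕ, n₀ ≤ n →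
    ∃ (N : ℕ) (φ : Fin N → (Fin n → Fin dB × Fin dC) → ℂ)
      (Np : Fin N → Matrix (Fin n → Fin dB × Fin dC) (Fin n → Fin dB × Fin dC) ℂ),
      (2 : ℝ) ^ ((n : ℝ) * (R - ε)) ≤ (N : ℝ) ∧
      (∀ i, IsUnitVec (φ i)) ∧
      (∀ i, ∃ ψ, (tensorPow U n).mulVec ψ = φ i) ∧
      IsOneWayLOCC Np ∧
      (∀ i, 1 - ε ≤ (Matrix.trace (pureState (φ i) * Np i)).re)

/-- Base-2 Shannon entropy. -/
def shannonEntropy {ι : Type*} [Fintype ι] (q : ι → ℝ) : ℝ := -∑ x, q x * Real.logb 2 (q x)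

/-! ### Entropy and capped spectra -/

/-- The tangent-line bound at `u` for the concave function `x ↦ -x log x`. -/
lemma neg_mul_log_le {x u : ℝ} (hx : 0 ≤ x) (hu : 0 < u) :
    -(x * Real.log x) ≤ -(x * Real.log u) + u - x := by
  rcases hx.eq_or_lt with rfl | hx
  · simp [hu.le]
  · have h := Real.log_le_sub_one_of_pos (div_pos hu hx)
    rw [Real.log_div hu.ne' hx.ne'] at h
    have h2 := mul_le_mul_of_nonneg_left h hx.le
    have h3 : x * (u / x - 1) = u - x := by field_simp
    nlinarith

/-- Weights of total mass `s` on at most `K` points have entropy at most that of the uniform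
distribution, `s log (K / s)`. -/
lemma sum_neg_mul_log_le {ι : Type*} (S : Finset ι) (p : ι → ℝ) (hp : ∀ i, 0 ≤ p i)
    {K : ℝ} (hK : 0 < K) (hSK : (S.card : ℝ) ≤ K) :
    -∑ i ∈ S, p i * Real.log (p i) ≤
      (∑ i ∈ S, p i) * Real.log K - (∑ i ∈ S, p i) * Real.log (∑ i ∈ S, p i) := by
  have ha0 : 0 ≤ ∑ i ∈ S, p i := Finset.sum_nonneg fun i _ => hp i
  rcases ha0.eq_or_lt with ha | ha
  · have : ∀ i ∈ S, p i = 0 := (Finset.sum_eq_zero_iff_of_nonneg fun i _ => hp i).1 ha.symm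
    rw [← ha, Finset.sum_eq_zero (fun i hi => by rw [this i hi, zero_mul])]
    simp
  · set a := ∑ i ∈ S, p i with ha_def
    have h1 : ∑ i ∈ S, -(p i * Real.log (p i)) ≤
        ∑ i ∈ S, (-(p i * Real.log (a / K)) + a / K - p i) :=
      Finset.sum_le_sum fun i _ => neg_mul_log_le (hp i) (div_pos ha hK)
    have h2 : (S.card : ℝ) * (a / K) ≤ a := by
      rw [mul_div_assoc', div_le_iff₀ hK]; nlinarith
    rw [Finset.sum_sub_distrib, Finset.sum_add_distrib, Finset.sum_neg_distrib,
      Finset.sum_neg_distrib, ← Finset.sum_mul, Finset.sum_const, nsmul_eq_mul, ← ha_def,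
      Real.log_div ha.ne' hK.ne'] at h1
    linarith

/-- For a probability vector `p` of entropy at least `log d - Δ`, multiplying all entries by
`γ / (γ - 1)` and then capping them at `2 ^ (γ (Δ + 1)) / d` leaves a total mass of at least `1`. -/
lemma one_le_sum_min {d : ℕ} (hd : 0 < d) (p : Fin d → ℝ) (hp : ∀ i, 0 ≤ p i)
    (hp1 : ∑ i, p i = 1) {Δ γ : ℝ} (hΔ : 0 ≤ Δ) (hγ : 1 < γ)
    (hE : Real.logb 2 d - Δ ≤ -∑ i, p i * Real.logb 2 (p i)) :
    1 ≤ ∑ i, min (γ / (γ - 1) * p i) ((2 : ℝ) ^ (γ * (Δ + 1)) / d) := by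
  set r := γ / (γ - 1) with hr
  set T := (2 : ℝ) ^ (γ * (Δ + 1)) with hT
  have hd' : (0 : ℝ) < d := by exact_mod_cast hd
  have hT0 : 0 < T := by positivity
  have hγ1 : 0 < γ - 1 := by linarith
  have hr1 : 1 ≤ r := by rw [hr, le_div_iff₀ hγ1]; linarith
  have hl2 : (0 : ℝ) < Real.log 2 := Real.log_pos (by norm_num)
  have hl2' := Real.log_two_gt_d9
  let A : Finset (Fin d) := Finset.univ.filter fun i => T / d < r * p i
  let B : Finset (Fin d) := Finset.univ.filter fun i => ¬ T / d < r * p i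
  set a := ∑ i ∈ A, p i with ha
  set b := ∑ i ∈ B, p i with hb
  have ha0 : 0 ≤ a := Finset.sum_nonneg fun i _ => hp i
  have hb0 : 0 ≤ b := Finset.sum_nonneg fun i _ => hp i
  have hab : a + b = 1 := by
    rw [← hp1]; exact Finset.sum_filter_add_sum_filter_not _ _ _
  have hsum : ∑ i, min (r * p i) (T / d) = A.card * (T / d) + r * b := by
    rw [← Finset.sum_filter_add_sum_filter_not Finset.univ (fun i => T / d < r * p i)]
    congr 1
    · rw [← nsmul_eq_mul, ← Finset.sum_const]
      exact Finset.sum_congr rfl fun i hi => min_eq_right (Finset.mem_filter.1 hi).2.le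
    · rw [hb, Finset.mul_sum]
      exact Finset.sum_congr rfl fun i hi => min_eq_left (not_lt.1 (Finset.mem_filter.1 hi).2)
  rw [hsum]
  rcases le_or_gt (a * γ) 1 with h | h
  · have h1 : 0 ≤ (A.card : ℝ) * (T / d) := by positivity
    have h2 : 1 ≤ r * b := by
      rw [hr, div_mul_eq_mul_div, le_div_iff₀ hγ1]; nlinarith
    linarith
  -- the uncapped entries contribute `r * b ≥ b = 1 - a`
  · suffices h1 : a ≤ A.card * (T / d) by nlinarith
    have ha1 : 0 < a := by
      by_contra hc
      nlinarith
    have hA : 0 < A.card := by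
      rw [Finset.card_pos]
      by_contra hc
      rw [Finset.not_nonempty_iff_eq_empty] at hc
      rw [ha, hc, Finset.sum_empty] at ha1
      exact ha1.false
    have hA' : (0 : ℝ) < A.card := by exact_mod_cast hA
    have e1 := sum_neg_mul_log_le A p hp hA' le_rfl
    have e2 := sum_neg_mul_log_le B p hp hd' (by
      exact_mod_cast (Finset.card_le_univ B).trans_eq (Fintype.card_fin d))
    rw [← ha] at e1
    rw [← hb] at e2
    have e3 : ∑ i, p i * Real.log (p i) =
        ∑ i ∈ A, p i * Real.log (p i) + ∑ i ∈ B, p i * Real.log (p i) :=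
      (Finset.sum_filter_add_sum_filter_not _ _ _).symm
    have e4 : Real.log d - Δ * Real.log 2 ≤ -∑ i, p i * Real.log (p i) := by
      have := mul_le_mul_of_nonneg_right hE hl2.le
      have h5 : ∀ y : ℝ, Real.logb 2 y * Real.log 2 = Real.log y := fun y => by
        rw [Real.logb]; field_simp
      rw [sub_mul, h5, neg_mul, Finset.sum_mul] at this
      simpa only [mul_assoc, h5] using this
    -- the tangent at `1 / 2` gives `-b log b ≤ 1 / 2 - (1 - log 2) b ≤ 1 / 2`
    have e5 : -(b * Real.log b) ≤ Real.log 2 := by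
      have := neg_mul_log_le hb0 (show (0 : ℝ) < 1 / 2 by norm_num)
      rw [one_div, Real.log_inv] at this
      have hb1 : b ≤ 1 := by linarith
      have : b * Real.log 2 ≤ b * 1 :=
        mul_le_mul_of_nonneg_left (by have := Real.log_two_lt_d9; linarith) hb0
      linarith
    have e6 : -((Δ + 1) * Real.log 2) ≤ a * (Real.log A.card - Real.log a - Real.log d) := by
      have : b = 1 - a := by linarith
      have : b * Real.log d = Real.log d - a * Real.log d := by rw [this]; ring
      linarith
    -- division by `a` costs at most a factor `γ`, because `1 < a * γ`
    have e7 : -(γ * (Δ + 1) * Real.log 2) ≤ Real.log A.card - Real.log a - Real.log d := by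
      by_contra hc
      push Not at hc
      have hx : 0 < (Δ + 1) * Real.log 2 := by positivity
      nlinarith
    have e8 : Real.log a ≤ Real.log (A.card * (T / d)) := by
      rw [Real.log_mul hA'.ne' (by positivity), Real.log_div hT0.ne' hd'.ne', hT,
        Real.log_rpow (by norm_num)]
      linarith
    exact (Real.log_le_log_iff ha1 (by positivity)).1 e8

/-! ### Detection probabilities of close vectors -/

lemma exists_factor {ι : Type*} [Fintype ι] {M : Matrix ι ι ℂ} (hM : M.PosSemidef) :
    ∃ B : Matrix ι ι ℂ, M = Bᴴ * B := by
  open scoped MatrixOrder in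
  exact CStarAlgebra.nonneg_iff_eq_star_mul_self.1 hM.nonneg

lemma trace_pureState_mul {ι : Type*} [Fintype ι] (v : ι → ℂ) (M : Matrix ι ι ℂ) :
    (pureState v * M).trace = star v ⬝ᵥ M *ᵥ v := by
  rw [pureState, Matrix.trace_mul_comm, Matrix.mul_vecMulVec, Matrix.trace_vecMulVec,
    dotProduct_comm]

lemma star_dot_factor {ι : Type*} [Fintype ι] (B : Matrix ι ι ℂ) (u w : ι → ℂ) :
    star u ⬝ᵥ (Bᴴ * B) *ᵥ w = inner ℂ (WithLp.toLp 2 (B *ᵥ u)) (WithLp.toLp 2 (B *ᵥ w)) := by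
  rw [← Matrix.mulVec_mulVec, Matrix.dotProduct_mulVec, ← Matrix.star_mulVec,
    EuclideanSpace.inner_toLp_toLp, dotProduct_comm]

/-- If the unit vectors `(c, c')` and `(d, d')` of `ℝ²` have scalar product at least `o`, then
`c² - d² ≤ √(1 - o²)`: with angles `α`, `β` one has `cos² α - cos² β = sin (β - α) sin (β + α)`. -/
lemma fidelity_aux {c c' d d' : ℝ}
    (h1 : c ^ 2 + c' ^ 2 = 1) (h2 : d ^ 2 + d' ^ 2 = 1) {o : ℝ} (ho : 0 ≤ o)
    (h : o ≤ c * d + c' * d') : c ^ 2 - d ^ 2 ≤ √(1 - o ^ 2) := by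
  apply Real.le_sqrt_of_sq_le
  have e0 : o ^ 2 ≤ (c * d + c' * d') ^ 2 := by gcongr
  have e1 : (c * d + c' * d') ^ 2 + (c * d' - c' * d) ^ 2 = 1 := by
    calc _ = (c ^ 2 + c' ^ 2) * (d ^ 2 + d' ^ 2) := by ring
      _ = 1 := by rw [h1, h2, one_mul]
  have e2 : (c * d' + c' * d) ^ 2 + (c * d - c' * d') ^ 2 = 1 := by
    calc _ = (c ^ 2 + c' ^ 2) * (d ^ 2 + d' ^ 2) := by ring
      _ = 1 := by rw [h1, h2, one_mul]
  have e3 : c ^ 2 - d ^ 2 = (c * d' - c' * d) * (c * d' + c' * d) := by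
    calc _ = c ^ 2 * (d ^ 2 + d' ^ 2) - d ^ 2 * (c ^ 2 + c' ^ 2) := by rw [h1, h2]; ring
      _ = _ := by ring
  have e4 : (c * d' + c' * d) ^ 2 ≤ 1 := by nlinarith [sq_nonneg (c * d - c' * d')]
  rw [e3, mul_pow]
  nlinarith [mul_le_mul_of_nonneg_left e4 (sq_nonneg (c * d' - c' * d))]

/-- Gentle measurement bound: an effect `0 ≤ M ≤ 1` distinguishes two pure states by at most
`√(1 - |⟨v, w⟩|²)`. Writing `M = A* A` and `1 - M = B* B`, the scalar product splits as
`⟨v, w⟩ = ⟨A v, A w⟩ + ⟨B v, B w⟩`, and Cauchy-Schwarz reduces the claim to `fidelity_aux`. -/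
lemma effect_le_add_sqrt {ι : Type*} [Fintype ι] [DecidableEq ι] {M : Matrix ι ι ℂ}
    (hM : M.PosSemidef) (hM' : (1 - M).PosSemidef) {v w : ι → ℂ}
    (hv : star v ⬝ᵥ v = 1) (hw : star w ⬝ᵥ w = 1) :
    (star v ⬝ᵥ M *ᵥ v).re ≤ (star w ⬝ᵥ M *ᵥ w).re + √(1 - ‖star v ⬝ᵥ w‖ ^ 2) := by
  obtain ⟨A, hA⟩ := exists_factor hM
  obtain ⟨B, hB⟩ := exists_factor hM'
  have split : ∀ x y : ι → ℂ, star x ⬝ᵥ y =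
      inner ℂ (WithLp.toLp 2 (A *ᵥ x)) (WithLp.toLp 2 (A *ᵥ y)) +
      inner ℂ (WithLp.toLp 2 (B *ᵥ x)) (WithLp.toLp 2 (B *ᵥ y)) := fun x y => by
    rw [← star_dot_factor, ← star_dot_factor, ← hA, ← hB, ← dotProduct_add, ← Matrix.add_mulVec,
      add_sub_cancel, Matrix.one_mulVec]
  have unit : ∀ x : ι → ℂ, star x ⬝ᵥ x = 1 →
      ‖WithLp.toLp 2 (A *ᵥ x)‖ ^ 2 + ‖WithLp.toLp 2 (B *ᵥ x)‖ ^ 2 = 1 := fun x hx => by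
    have := (split x x).symm.trans hx
    have := congrArg RCLike.re this
    rw [map_add, inner_self_eq_norm_sq, inner_self_eq_norm_sq] at this
    simpa using this
  have quad : ∀ x : ι → ℂ, (star x ⬝ᵥ M *ᵥ x).re = ‖WithLp.toLp 2 (A *ᵥ x)‖ ^ 2 := fun x => by
    rw [hA, star_dot_factor, inner_self_eq_norm_sq_to_K]
    norm_cast
  have key := fidelity_aux
    (unit v hv) (unit w hw) (norm_nonneg (star v ⬝ᵥ w)) (by
      rw [split]
      exact (norm_add_le _ _).trans (add_le_add (norm_inner_le_norm _ _) (norm_inner_le_norm _ _)))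
  rw [quad, quad]
  linarith

/-! ### The PPT condition -/

lemma trace_mul_ptranspose {dB dC : ℕ} (X Y : Matrix (Fin dB × Fin dC) (Fin dB × Fin dC) ℂ) :
    (ptranspose X * ptranspose Y).trace = (X * Y).trace := by
  simp only [Matrix.trace, Matrix.diag, Matrix.mul_apply, ptranspose, Fintype.sum_prod_type]
  refine Finset.sum_congr rfl fun i _ => ?_
  rw [Finset.sum_comm]
  simp_rw [Finset.sum_comm (s := (Finset.univ : Finset (Fin dC)))
    (t := (Finset.univ : Finset (Fin dB)))]
  refine Finset.sum_congr rfl fun k _ => ?_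
  rw [Finset.sum_comm]

lemma trace_ptranspose {dB dC : ℕ} (X : Matrix (Fin dB × Fin dC) (Fin dB × Fin dC) ℂ) :
    (ptranspose X).trace = X.trace := rfl

/-- The coefficient matrix of a bipartite vector. -/
def coeffMatrix {dB dC : ℕ} (v : Fin dB × Fin dC → ℂ) : Matrix (Fin dB) (Fin dC) ℂ :=
  Matrix.of fun i j => v (i, j)

lemma ptraceC_pureState {dB dC : ℕ} (v : Fin dB × Fin dC → ℂ) :
    ptraceC (pureState v) = coeffMatrix v * (coeffMatrix v)ᴴ := by
  ext i k
  simp [ptraceC, pureState, Matrix.vecMulVec_apply, Matrix.mul_apply, coeffMatrix]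

lemma star_dotProduct_eq_trace {dB dC : ℕ} (x y : Fin dB × Fin dC → ℂ) :
    star x ⬝ᵥ y = (coeffMatrix y * (coeffMatrix x)ᴴ).trace := by
  simp [dotProduct, Matrix.trace, Matrix.mul_apply, Fintype.sum_prod_type, coeffMatrix, mul_comm]

lemma star_dotProduct_self_of_isUnitVec {ι : Type*} [Fintype ι] {v : ι → ℂ} (hv : IsUnitVec v) :
    star v ⬝ᵥ v = 1 := by
  simp only [dotProduct, Pi.star_apply, Complex.star_def, ← Complex.normSq_eq_conj_mul_self]
  exact_mod_cast hv

/-- If the reduced state of `w` is at most `t`, so is the partial transpose of `|w⟩⟨w|`. With `W`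
and `X` the coefficient matrices of `w` and `x`, and `Y = X* W`, the quadratic form of `|w⟩⟨w|^Γ`
at `x` is `∑ Y j l * conj (Y l j)`, which is at most `∑ |Y j l|² = Tr (X* W W* X) ≤ t ‖x‖²`. -/
lemma posSemidef_smul_one_sub_ptranspose {dB dC : ℕ} (w : Fin dB × Fin dC → ℂ) {t : ℝ}
    (h : ((t : ℂ) • (1 : Matrix (Fin dB) (Fin dB) ℂ) - ptraceC (pureState w)).PosSemidef) :
    ((t : ℂ) • (1 : Matrix (Fin dB × Fin dC) (Fin dB × Fin dC) ℂ)
      - ptranspose (pureState w)).PosSemidef := by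
  have hherm : (ptranspose (pureState w)).IsHermitian := by
    ext p q
    simp [ptranspose, pureState, Matrix.vecMulVec_apply, mul_comm]
  refine .of_dotProduct_mulVec_nonneg ?_ fun x => ?_
  · refine Matrix.IsHermitian.sub ?_ hherm
    simp [Matrix.IsHermitian, Matrix.conjTranspose_smul]
  let W := coeffMatrix w
  let X := coeffMatrix x
  let Y : Matrix (Fin dC) (Fin dC) ℂ := Xᴴ * W
  have hW : ptraceC (pureState w) = W * Wᴴ := ptraceC_pureState w
  have h1 : 0 ≤ (Xᴴ * ((t : ℂ) • (1 : Matrix (Fin dB) (Fin dB) ℂ) - W * Wᴴ) * X).trace := by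
    rw [← hW]
    exact (h.conjTranspose_mul_mul_same X).trace_nonneg
  have h2 : Xᴴ * ((t : ℂ) • (1 : Matrix (Fin dB) (Fin dB) ℂ) - W * Wᴴ) * X
      = (t : ℂ) • (Xᴴ * X) - Y * Yᴴ := by
    simp [Y, Matrix.mul_sub, Matrix.sub_mul, Matrix.mul_assoc]
  have h3 : star x ⬝ᵥ x = (Xᴴ * X).trace := by
    rw [star_dotProduct_eq_trace, Matrix.trace_mul_comm]
  have h4 : star x ⬝ᵥ ptranspose (pureState w) *ᵥ x = ∑ j, ∑ l, Y j l * star (Y l j) := by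
    simp only [dotProduct, Matrix.mulVec, Fintype.sum_prod_type, ptranspose, pureState,
      Matrix.vecMulVec_apply, Y, Matrix.mul_apply, Finset.mul_sum, Finset.sum_mul, star_sum]
    rw [Finset.sum_comm]
    refine Finset.sum_congr rfl fun j _ => ?_
    simp_rw [Finset.sum_comm (s := (Finset.univ : Finset (Fin dB)))
      (t := (Finset.univ : Finset (Fin dC)))]
    refine Finset.sum_congr rfl fun l _ => ?_
    rw [Finset.sum_comm]
    refine Finset.sum_congr rfl fun k _ => Finset.sum_congr rfl fun i _ => ?_
    simp [X, W, coeffMatrix]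
    ring
  have h5 : (Y * Yᴴ).trace = ∑ j, ∑ l, Y j l * star (Y j l) := by
    simp [Matrix.trace, Matrix.mul_apply]
  have h6 : (0 : ℂ) ≤ ∑ j, ∑ l, (Y j l - Y l j) * star (Y j l - Y l j) :=
    Finset.sum_nonneg fun j _ => Finset.sum_nonneg fun l _ => mul_star_self_nonneg _
  have h7 : ∑ j, ∑ l, (Y j l - Y l j) * star (Y j l - Y l j) =
      2 * (∑ j, ∑ l, Y j l * star (Y j l) - ∑ j, ∑ l, Y j l * star (Y l j)) := by
    have a1 : ∑ j, ∑ l, Y l j * star (Y l j) = ∑ j, ∑ l, Y j l * star (Y j l) :=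
      Finset.sum_comm
    have a2 : ∑ j, ∑ l, Y l j * star (Y j l) = ∑ j, ∑ l, Y j l * star (Y l j) :=
      Finset.sum_comm
    simp only [star_sub, sub_mul, mul_sub, Finset.sum_sub_distrib, a1, a2]
    ring
  rw [h2, Matrix.trace_sub, Matrix.trace_smul, h5, ← h3] at h1
  rw [h7] at h6
  have h8 := add_nonneg h1 (mul_nonneg (show (0 : ℂ) ≤ 1 / 2 by positivity) h6)
  rw [Matrix.sub_mulVec, dotProduct_sub, Matrix.smul_mulVec, Matrix.one_mulVec, dotProduct_smul,
    h4]
  convert h8 using 1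
  ring

/-- A PPT operator `M` satisfies `⟨w, M w⟩ ≤ t Tr M` whenever the reduced state of `w` is at
most `t`. -/
lemma ppt_trace_le {dB dC : ℕ} {w : Fin dB × Fin dC → ℂ} {t : ℝ}
    (h : ((t : ℂ) • (1 : Matrix (Fin dB) (Fin dB) ℂ) - ptraceC (pureState w)).PosSemidef)
    {M : Matrix (Fin dB × Fin dC) (Fin dB × Fin dC) ℂ} (hM : (ptranspose M).PosSemidef) :
    (star w ⬝ᵥ M *ᵥ w).re ≤ t * M.trace.re := by
  obtain ⟨B, hB⟩ := exists_factor hM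
  have h1 := ((posSemidef_smul_one_sub_ptranspose w h).mul_mul_conjTranspose_same B).trace_nonneg
  rw [Matrix.trace_mul_cycle, ← hB, Matrix.trace_mul_comm, Matrix.sub_mul, Matrix.trace_sub,
    trace_mul_ptranspose, Matrix.smul_mul, Matrix.one_mul, Matrix.trace_smul, trace_ptranspose,
    trace_pureState_mul] at h1
  have h2 := (Complex.le_def.1 h1).1
  simp at h2
  exact h2

/-! ### Flattening a highly entangled vector -/

/-- A unit vector of entanglement at least `log dB - Δ` has squared overlap at least `1 - 1/γ` with
a unit vector whose reduced state is at most `2 ^ (γ (Δ + 1)) / dB`. -/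
lemma exists_capped_vector {dB dC : ℕ} (hB : 0 < dB) {v : Fin dB × Fin dC → ℂ}
    (hv : IsUnitVec v) {Δ γ : ℝ} (hΔ : 0 ≤ Δ) (hγ : 1 < γ)
    (hE : entg v ≥ Real.logb 2 dB - Δ) :
    ∃ w : Fin dB × Fin dC → ℂ, star w ⬝ᵥ w = 1 ∧ 1 - 1 / γ ≤ ‖star v ⬝ᵥ w‖ ^ 2 ∧
      ((((2 : ℝ) ^ (γ * (Δ + 1)) / dB : ℝ) : ℂ) • (1 : Matrix (Fin dB) (Fin dB) ℂ)
        - ptraceC (pureState w)).PosSemidef := by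
  let W := coeffMatrix v
  have hW : ptraceC (pureState v) = W * Wᴴ := ptraceC_pureState v
  have hpsd : (ptraceC (pureState v)).PosSemidef := hW ▸ Matrix.posSemidef_self_mul_conjTranspose W
  have hH := hpsd.isHermitian
  set p := hH.eigenvalues with hp_def
  have hp : ∀ i, 0 ≤ p i := hpsd.eigenvalues_nonneg
  rw [entg, vnEntropy, dif_pos hH] at hE
  have hp1 : ∑ i, p i = 1 := by
    have : (ptraceC (pureState v)).trace = ∑ i, (p i : ℂ) := hH.trace_eq_sum_eigenvalues
    rw [hW, ← star_dotProduct_eq_trace,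
      star_dotProduct_self_of_isUnitVec hv] at this
    exact_mod_cast this.symm
  set t := (2 : ℝ) ^ (γ * (Δ + 1)) / dB with ht
  set r := γ / (γ - 1) with hr
  have hr0 : 0 < r := div_pos (by linarith) (by linarith)
  have ht0 : 0 < t := by positivity
  set Z := ∑ i, min (r * p i) t with hZ_def
  have hZ : 1 ≤ Z := one_le_sum_min hB p hp hp1 hΔ hγ (by simpa using hE)
  let μ : Fin dB → ℝ := fun i => min (r * p i) t / Z
  have hμ0 : ∀ i, 0 ≤ μ i := fun i => div_nonneg (le_min (by have := hp i; positivity) ht0.le)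
    (by linarith)
  have hμt : ∀ i, μ i ≤ t := fun i => div_le_of_le_mul₀ (by linarith) ht0.le
    ((min_le_right _ _).trans (le_mul_of_one_le_right ht0.le hZ))
  have hμr : ∀ i, μ i ≤ r * p i := fun i =>
    div_le_of_le_mul₀ (by linarith) (by have := hp i; positivity)
    ((min_le_left _ _).trans (le_mul_of_one_le_right (by have := hp i; positivity) hZ))
  have hμ1 : ∑ i, μ i = 1 := by
    rw [← Finset.sum_div, ← hZ_def, div_self (by linarith)]
  -- the filter `K` has eigenvalues `f i`; where `p i = 0` also `μ i = 0`, and `f i = 0`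
  let f : Fin dB → ℝ := fun i => √(μ i / p i)
  have hf : ∀ i, f i * p i * f i = μ i := fun i => by
    rcases (hp i).eq_or_lt with h | h
    · have := hμr i
      rw [← h, mul_zero] at this
      rw [← h, le_antisymm this (hμ0 i)]; ring
    · have := Real.mul_self_sqrt (div_nonneg (hμ0 i) h.le)
      calc f i * p i * f i = (f i * f i) * p i := by ring
        _ = μ i := by rw [this]; field_simp
  -- `f ≤ √r`, hence `f p ≥ μ / √r`; summed over `i`, this bounds the overlap `∑ f p` of the two
  -- vectors below by `1 / √r`
  have hfr : ∀ i, μ i ≤ √r * (f i * p i) := fun i => by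
    have h1 : f i ≤ √r := Real.sqrt_le_sqrt (div_le_of_le_mul₀ (hp i) hr0.le (hμr i))
    rw [← hf i]
    have : 0 ≤ f i * p i := mul_nonneg (Real.sqrt_nonneg _) (hp i)
    nlinarith
  let U : Matrix (Fin dB) (Fin dB) ℂ := hH.eigenvectorUnitary
  have hU : Uᴴ * U = 1 := Unitary.coe_star_mul_self hH.eigenvectorUnitary
  have hU' : U * Uᴴ = 1 := Unitary.coe_mul_star_self hH.eigenvectorUnitary
  -- the functional calculus of the reduced state: `D g` has eigenvalue `g i` where it has `p i`
  let D (g : Fin dB → ℝ) : Matrix (Fin dB) (Fin dB) ℂ :=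
    U * Matrix.diagonal (fun i => (g i : ℂ)) * Uᴴ
  have hDmul : ∀ g h, D g * D h = D fun i => g i * h i := fun g h => by
    calc D g * D h = U * Matrix.diagonal (fun i => (g i : ℂ)) * (Uᴴ * U) *
          Matrix.diagonal (fun i => (h i : ℂ)) * Uᴴ := by simp only [D, Matrix.mul_assoc]
      _ = _ := by
        rw [hU, Matrix.mul_one, Matrix.mul_assoc U, Matrix.diagonal_mul_diagonal]
        simp [D]
  have hDstar : ∀ g, (D g)ᴴ = D g := fun g => by
    have : star (fun i => (g i : ℂ)) = fun i => (g i : ℂ) := by ext; simp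
    simp [D, Matrix.mul_assoc, Matrix.conjTranspose_mul, Matrix.diagonal_conjTranspose, this]
  have hDtrace : ∀ g, (D g).trace = ((∑ i, g i : ℝ) : ℂ) := fun g => by
    simp only [D]
    rw [Matrix.trace_mul_cycle, hU, Matrix.one_mul, Matrix.trace_diagonal]
    push_cast; rfl
  have hspec : W * Wᴴ = D p := by
    rw [← hW]
    exact hH.spectral_theorem
  let w : Fin dB × Fin dC → ℂ := fun x => (D f * W) x.1 x.2
  have hw : coeffMatrix w = D f * W := rfl
  have hww : coeffMatrix w * (coeffMatrix w)ᴴ = D μ := by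
    rw [hw, Matrix.conjTranspose_mul, hDstar, Matrix.mul_assoc, ← Matrix.mul_assoc W, hspec,
      hDmul, hDmul]
    congr 1
    ext i
    rw [← hf i]; ring
  refine ⟨w, ?_, ?_, ?_⟩
  · rw [star_dotProduct_eq_trace, hww, hDtrace, hμ1, Complex.ofReal_one]
  · have h1 : star v ⬝ᵥ w = ((∑ i, f i * p i : ℝ) : ℂ) := by
      rw [star_dotProduct_eq_trace, hw, Matrix.mul_assoc, hspec, hDmul, hDtrace]
    rw [h1, Complex.norm_real, Real.norm_eq_abs, sq_abs]
    have h2 : 1 ≤ √r * ∑ i, f i * p i := by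
      rw [← hμ1, Finset.mul_sum]
      exact Finset.sum_le_sum fun i _ => hfr i
    have h3 : 1 ≤ r * (∑ i, f i * p i) ^ 2 := by
      calc (1 : ℝ) ≤ (√r * ∑ i, f i * p i) ^ 2 := one_le_pow₀ h2
        _ = _ := by rw [mul_pow, Real.sq_sqrt hr0.le]
    have h4 : 1 - 1 / γ = 1 / r := by
      rw [hr]; field_simp
    rw [h4, div_le_iff₀ hr0]; linarith
  · have : ((t : ℂ) • (1 : Matrix (Fin dB) (Fin dB) ℂ) - ptraceC (pureState w)) =
        U * Matrix.diagonal (fun i => ((t - μ i : ℝ) : ℂ)) * Uᴴ := by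
      have e : Matrix.diagonal (fun i => ((t - μ i : ℝ) : ℂ)) =
          (t : ℂ) • (1 : Matrix (Fin dB) (Fin dB) ℂ) - Matrix.diagonal fun i => (μ i : ℂ) := by
        rw [Matrix.smul_one_eq_diagonal, Matrix.diagonal_sub]
        simp
      rw [ptraceC_pureState, hww, e, Matrix.mul_sub, Matrix.sub_mul, Matrix.mul_smul, Matrix.mul_one,
        Matrix.smul_mul, hU']
    rw [this]
    refine Matrix.PosSemidef.mul_mul_conjTranspose_same ?_ U
    rw [Matrix.posSemidef_diagonal_iff]
    intro i
    exact_mod_cast sub_nonneg.2 (hμt i)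

/-! ### The bound on the code size -/

/-- theorem 5: a PPT-decoded code of N pure states with entanglement
deficits Δ i and error probability ≤ ε satisfies, for γ > 1/(1−ε)²,
N ≤ (1 − ε − √(1/γ))⁻¹ · ((1/N)·∑ 2^{−γ(Δᵢ+1)})⁻¹ · dC
  ≤ (1 − ε − √(1/γ))⁻¹ · 2^{γ·∑(Δᵢ+1)/N} · dC. -/
theorem stmt11 (dB dC : ℕ) (hB : 0 < dB) (hBC : dB ≤ dC)
    (N : ℕ) (hN : 0 < N) (ε : ℝ) (hε0 : 0 ≤ ε) (hε1 : ε < 1)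
    (Δ : Fin N → ℝ) (hΔ : ∀ i, 0 ≤ Δ i)
    (γ : ℝ) (hγ : 1 / (1 - ε) ^ 2 < γ)
    (v : Fin N → Fin dB × Fin dC → ℂ) (hv : ∀ i, IsUnitVec (v i))
    (hE : ∀ i, entg (v i) ≥ Real.logb 2 dB - Δ i)
    (M : Fin N → Matrix (Fin dB × Fin dC) (Fin dB × Fin dC) ℂ)
    (hM : ∀ i, (M i).PosSemidef) (hMΓ : ∀ i, (ptranspose (M i)).PosSemidef)
    (hMsum : (1 - ∑ i, M i).PosSemidef)
    (htr : ∀ i, 1 - ε ≤ (Matrix.trace (pureState (v i) * M i)).re) :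
    (N : ℝ) ≤ (1 - ε - Real.sqrt (1 / γ))⁻¹ *
        ((1 / (N : ℝ)) * ∑ i, (2 : ℝ) ^ (-(γ * (Δ i + 1))))⁻¹ * dC ∧
    (N : ℝ) ≤ (1 - ε - Real.sqrt (1 / γ))⁻¹ *
        (2 : ℝ) ^ (γ * (∑ i, (Δ i + 1)) / (N : ℝ)) * dC := by
  have hε : 0 < 1 - ε := by linarith
  have hγ1 : 1 < γ := by
    refine lt_of_le_of_lt ?_ hγ
    rw [le_div_iff₀ (by positivity)]
    nlinarith
  have hγ0 : 0 < γ := by linarith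
  have hB' : (0 : ℝ) < dB := by exact_mod_cast hB
  have hN' : (0 : ℝ) < N := by exact_mod_cast hN
  have hc : 0 < 1 - ε - √(1 / γ) := by
    have : √(1 / γ) < 1 - ε := by
      rw [Real.sqrt_lt' hε, div_lt_iff₀ hγ0]
      rwa [div_lt_iff₀ (by positivity), mul_comm] at hγ
    linarith
  set c := 1 - ε - √(1 / γ) with hc_def
  have hM1 : ∀ i, (1 - M i).PosSemidef := fun i => by
    have : 1 - M i = (1 - ∑ j, M j) + ∑ j ∈ Finset.univ.erase i, M j := by
      rw [← Finset.add_sum_erase _ _ (Finset.mem_univ i)]; abel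
    rw [this]
    exact hMsum.add (Matrix.posSemidef_sum _ fun j _ => hM j)
  have key : ∀ i, c * (dB * (2 : ℝ) ^ (-(γ * (Δ i + 1)))) ≤ (M i).trace.re := fun i => by
    obtain ⟨w, hw1, hw2, hw3⟩ := exists_capped_vector hB (hv i) (hΔ i) hγ1 (hE i)
    have h1 := effect_le_add_sqrt (hM i) (hM1 i) (star_dotProduct_self_of_isUnitVec (hv i)) hw1
    have h2 := ppt_trace_le hw3 (hMΓ i)
    have h3 := htr i
    rw [trace_pureState_mul] at h3
    have h4 : √(1 - ‖star (v i) ⬝ᵥ w‖ ^ 2) ≤ √(1 / γ) := Real.sqrt_le_sqrt (by linarith)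
    have h5 : c ≤ (2 : ℝ) ^ (γ * (Δ i + 1)) / dB * (M i).trace.re := by linarith
    have h6 : (0 : ℝ) < (2 : ℝ) ^ (γ * (Δ i + 1)) := by positivity
    rw [Real.rpow_neg (by norm_num)]
    rw [div_mul_eq_mul_div, le_div_iff₀ hB'] at h5
    rw [← mul_assoc, ← div_eq_mul_inv, div_le_iff₀ h6]
    linarith
  set S := ∑ i, (2 : ℝ) ^ (-(γ * (Δ i + 1))) with hS
  have hne : (Finset.univ : Finset (Fin N)).Nonempty := ⟨⟨0, hN⟩, Finset.mem_univ _⟩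
  have hS0 : 0 < S := Finset.sum_pos (fun i _ => by positivity) hne
  -- the effects `M i` share the total trace `dB * dC` of the identity
  have htot : c * S ≤ dC := by
    have h1 := (Complex.le_def.1 hMsum.trace_nonneg).1
    simp only [Matrix.trace_sub, Matrix.trace_one, Fintype.card_prod, Fintype.card_fin,
      Matrix.trace_sum, Complex.sub_re, Complex.re_sum, Complex.zero_re, Complex.natCast_re,
      Nat.cast_mul, Complex.mul_re, Complex.natCast_im, mul_zero, sub_zero] at h1
    have h2 := Finset.sum_le_sum fun i (_ : i ∈ Finset.univ) => key i
    rw [← Finset.mul_sum, ← Finset.mul_sum, ← hS] at h2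
    have h3 : dB * (c * S) ≤ (dB : ℝ) * dC := by linarith
    exact le_of_mul_le_mul_left h3 hB'
  have first : (N : ℝ) ≤ c⁻¹ * ((1 / (N : ℝ)) * S)⁻¹ * dC := by
    have : c⁻¹ * ((1 / (N : ℝ)) * S)⁻¹ * dC = N * (dC / (c * S)) := by field_simp
    rw [this]
    exact le_mul_of_one_le_right hN'.le ((one_le_div (by positivity)).2 htot)
  refine ⟨first, first.trans ?_⟩
  have jensen : (2 : ℝ) ^ (-(γ * (∑ i, (Δ i + 1)) / N)) ≤ (1 / (N : ℝ)) * S := by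
    have h := convexOn_exp.map_sum_le (t := Finset.univ) (w := fun _ : Fin N => 1 / (N : ℝ))
      (p := fun i => Real.log 2 * -(γ * (Δ i + 1))) (fun _ _ => by positivity)
      (by simp [hN'.ne']) (fun _ _ => Set.mem_univ _)
    simp only [smul_eq_mul, ← Finset.mul_sum] at h
    simp only [hS, Real.rpow_def_of_pos (show (0 : ℝ) < 2 by norm_num)]
    refine le_of_eq_of_le ?_ h
    congr 1
    rw [Finset.sum_neg_distrib, ← Finset.mul_sum]
    ring
  have h2 : ((1 / (N : ℝ)) * S)⁻¹ ≤ (2 : ℝ) ^ (γ * (∑ i, (Δ i + 1)) / N) := by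
    rw [Real.rpow_neg (by norm_num)] at jensen
    exact inv_le_of_inv_le₀ (by positivity) jensen
  gcongr
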